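/- Let h₁ be a harmonic polynomial on ℝ^p homogeneous of degree k, h₂ a harmonic polynomial on ℝ^q homogeneous of degree l, set κ₊ = k + p/2, κ₋ = l + q/2, let a, b ∈ ℕ and α ∈ ℂ ∖ {0,−1,−2,…}, and let f = h₁·h₂·ρ_x^a·ρ_y^b·ψ_α. Then at every point (x,y) with x ≠ 0 and y ≠ 0 (so that integer powers ρ_x^{a−1}, ρ_y^{b−1} are defined even when a = 0 or b = 0): (1) H f = (−κ₊ + κ₋ − 2a + 2b)·f; (2) X⁺ f = h₁·h₂·( −a(κ₊ + a − 1)·ρ_x^{a−1}ρ_y^b·ψ_α + ((κ₊ + 2a − α)/α)·ρ_x^a ρ_y^{b+1}·ψ_{α+1} ); (3) X⁻ f = h₁·h₂·( b(κ₋ + b − 1)·ρ_x^a ρ_y^{b−1}·ψ_α − ((κ₋ + 2b − α)/α)·ρ_x^{a+1} ρ_y^b·ψ_{α+1} ). -/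

import Mathlib

noncomputable section

/-- Points `(x, y) ∈ ℝ^p × ℝ^q`. -/
abbrev Pt (p q : ℕ) := (Fin p → ℝ) × (Fin q → ℝ)

/-- The partial derivative `∂_{x_i}` of a function on `ℝ^p × ℝ^q`. -/
def pdx (p q : ℕ) (i : Fin p) (f : Pt p q → ℂ) : Pt p q → ℂ :=
  fun z => fderiv ℝ f z ((Pi.single i 1 : Fin p → ℝ), (0 : Fin q → ℝ))

/-- The partial derivative `∂_{y_j}` of a function on `ℝ^p × ℝ^q`. -/
def pdy (p q : ℕ) (j : Fin q) (f : Pt p q → ℂ) : Pt p q → ℂ :=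
  fun z => fderiv ℝ f z ((0 : Fin p → ℝ), (Pi.single j 1 : Fin q → ℝ))

/-- `ρ_x = r_x²/2 = (Σ_i x_i²)/2`. -/
def rhox (p q : ℕ) (z : Pt p q) : ℝ := (∑ i, z.1 i ^ 2) / 2

/-- `ρ_y = r_y²/2 = (Σ_j y_j²)/2`. -/
def rhoy (p q : ℕ) (z : Pt p q) : ℝ := (∑ j, z.2 j ^ 2) / 2

/-- The operator `H = −E_x − p/2 + E_y + q/2`. -/
def HOp (p q : ℕ) (f : Pt p q → ℂ) : Pt p q → ℂ := fun z =>
  -(∑ i, ((z.1 i : ℝ) : ℂ) * pdx p q i f z) - ((p : ℂ) / 2) * f z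
    + (∑ j, ((z.2 j : ℝ) : ℂ) * pdy p q j f z) + ((q : ℂ) / 2) * f z

/-- The operator `X⁺ = −(1/2)(Δ_x + r_y²)`. -/
def XpOp (p q : ℕ) (f : Pt p q → ℂ) : Pt p q → ℂ := fun z =>
  -(1 / 2 : ℂ) * ((∑ i, pdx p q i (pdx p q i f) z) + (((∑ j, z.2 j ^ 2 : ℝ)) : ℂ) * f z)

/-- The operator `X⁻ = (1/2)(r_x² + Δ_y)`. -/
def XmOp (p q : ℕ) (f : Pt p q → ℂ) : Pt p q → ℂ := fun z =>
  (1 / 2 : ℂ) * ((((∑ i, z.1 i ^ 2 : ℝ)) : ℂ) * f z + ∑ j, pdy p q j (pdy p q j f) z)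

/-- Rising factorial `(α)ₙ = α(α+1)⋯(α+n−1)` for a complex number `α`. -/
def rising (α : ℂ) : ℕ → ℂ
  | 0 => 1
  | n + 1 => rising α n * (α + n)

/-- Falling factorial `⟨β⟩ₙ = β(β−1)⋯(β−n+1)` for a complex number `β`. -/
def falling (β : ℂ) : ℕ → ℂ
  | 0 => 1
  | n + 1 => falling β n * (β - n)

/-- `Ψ_α(u) = Σ_{n=0}^∞ ((−1)ⁿ/(n!·(α)ₙ))·uⁿ`. -/
def Psi (α : ℂ) (u : ℂ) : ℂ :=
  ∑' n : ℕ, ((-1) ^ n / ((n.factorial : ℂ) * rising α n)) * u ^ n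

/-- `ψ_α(x,y) = Ψ_α(ρ_x ρ_y)`. -/
def psiF (p q : ℕ) (α : ℂ) (z : Pt p q) : ℂ :=
  Psi α (((rhox p q z * rhoy p q z : ℝ)) : ℂ)

end

/-!
Freeze `y`. As a function of `x` alone, `f` is a constant times `h₁ · G(ρ_x)` with
`G(u) = u ^ a Ψ_α(s u)` and `s = ρ_y`. For `h` harmonic and homogeneous of degree `k` on `ℝ^p`,
`Δ (h · G(ρ)) = 2 h · (ρ G''(ρ) + κ G'(ρ))` with `κ = k + p/2`. From `Ψ_α' = -Ψ_{α+1} / α` and the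
contiguous relation `u Ψ_{α+2} = α (α + 1) (Ψ_{α+1} - Ψ_α)` one gets
`u G'' + κ G' = a (κ + a - 1) u ^ (a-1) Ψ_α - ((κ + 2a - α)/α) s u ^ a Ψ_{α+1} - s u ^ a Ψ_α`,
whose last term is cancelled by `r_y² = 2 s` in `X⁺`. Exchanging `x` and `y` gives `X⁻`. In `H`
the two Euler fields produce the same `Ψ_{α+1}` term, with opposite signs.
-/

open Filter Topology MvPolynomial

noncomputable section

/-- The coefficient of `uⁿ` in `Ψ_α(u)`. -/
def psiCoeff (α : ℂ) (n : ℕ) : ℂ := (-1) ^ n / ((n.factorial : ℂ) * rising α n)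

section PsiCoeff

variable {α : ℂ}

lemma add_natCast_ne_zero (hα : ∀ n : ℕ, α ≠ -(n : ℂ)) (n : ℕ) : α + n ≠ 0 :=
  fun h => hα n (eq_neg_of_add_eq_zero_left h)

lemma add_one_ne_neg_natCast (hα : ∀ n : ℕ, α ≠ -(n : ℂ)) (n : ℕ) : α + 1 ≠ -(n : ℂ) := by
  intro h
  apply hα (n + 1)
  push_cast
  linear_combination h

lemma rising_ne_zero (hα : ∀ n : ℕ, α ≠ -(n : ℂ)) (n : ℕ) : rising α n ≠ 0 := by
  induction n with
  | zero => exact one_ne_zero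
  | succ n ih => exact mul_ne_zero ih (add_natCast_ne_zero hα n)

lemma rising_succ_left (α : ℂ) (n : ℕ) : rising α (n + 1) = α * rising (α + 1) n := by
  induction n with
  | zero => simp [rising]
  | succ n ih =>
    rw [rising, ih, rising]
    push_cast
    ring

@[simp]
lemma psiCoeff_zero (α : ℂ) : psiCoeff α 0 = 1 := by simp [psiCoeff, rising]

lemma psiCoeff_ne_zero (hα : ∀ n : ℕ, α ≠ -(n : ℂ)) (n : ℕ) : psiCoeff α n ≠ 0 :=
  div_ne_zero (by simp) (mul_ne_zero (mod_cast n.factorial_ne_zero) (rising_ne_zero hα n))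

lemma psiCoeff_succ (hα : ∀ n : ℕ, α ≠ -(n : ℂ)) (n : ℕ) :
    (n + 1) * (α + n) * psiCoeff α (n + 1) = -psiCoeff α n := by
  have hrising := rising_ne_zero hα n
  have hαn := add_natCast_ne_zero hα n
  have hfact : (n.factorial : ℂ) ≠ 0 := mod_cast n.factorial_ne_zero
  rw [psiCoeff, psiCoeff, rising, Nat.factorial_succ]
  push_cast
  field_simp
  ring

lemma psiCoeff_succ_shift (hα : ∀ n : ℕ, α ≠ -(n : ℂ)) (n : ℕ) :
    α * ((n + 1) * psiCoeff α (n + 1)) = -psiCoeff (α + 1) n := by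
  have hα₀ : α ≠ 0 := by simpa using hα 0
  have hrising := rising_ne_zero (add_one_ne_neg_natCast hα) n
  have hfact : (n.factorial : ℂ) ≠ 0 := mod_cast n.factorial_ne_zero
  rw [psiCoeff, psiCoeff, rising_succ_left, Nat.factorial_succ]
  push_cast
  field_simp
  ring

lemma psiCoeff_contiguous (hα : ∀ n : ℕ, α ≠ -(n : ℂ)) (n : ℕ) :
    psiCoeff (α + 1 + 1) n =
      α * (α + 1) * (psiCoeff (α + 1) (n + 1) - psiCoeff α (n + 1)) := by
  have hα' := add_one_ne_neg_natCast hα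
  have hn : (n : ℂ) + 1 ≠ 0 := mod_cast n.succ_ne_zero
  have hcompare : α * psiCoeff α (n + 1) = (α + 1 + n) * psiCoeff (α + 1) (n + 1) := by
    apply mul_left_cancel₀ hn
    linear_combination psiCoeff_succ_shift hα n - psiCoeff_succ hα' n
  linear_combination psiCoeff_succ_shift hα' n + (α + 1) * hcompare

lemma tendsto_norm_psiCoeff_succ_div (hα : ∀ n : ℕ, α ≠ -(n : ℂ)) :
    Tendsto (fun n : ℕ => ‖psiCoeff α (n + 1)‖ / ‖psiCoeff α n‖) atTop (𝓝 0) := by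
  have hinv (β : ℂ) : Tendsto (fun n : ℕ => ((n : ℂ) + β)⁻¹) atTop (𝓝 0) :=
    tendsto_inv₀_cobounded.comp
      ((tendsto_add_const_cobounded β).comp tendsto_natCast_atTop_cobounded)
  have hratio (n : ℕ) : ‖((n : ℂ) + 1)⁻¹ * ((n : ℂ) + α)⁻¹‖ =
      ‖psiCoeff α (n + 1)‖ / ‖psiCoeff α n‖ := by
    have hn : (n : ℂ) + 1 ≠ 0 := mod_cast n.succ_ne_zero
    have hαn : (n : ℂ) + α ≠ 0 := by simpa only [add_comm] using add_natCast_ne_zero hα n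
    have hcoeff := psiCoeff_ne_zero hα n
    rw [← norm_div, ← norm_neg]
    congr 1
    field_simp
    linear_combination -psiCoeff_succ hα n
  simpa only [hratio, mul_zero, norm_zero] using ((hinv 1).mul (hinv α)).norm

lemma radius_ofScalars_psiCoeff (hα : ∀ n : ℕ, α ≠ -(n : ℂ)) :
    (FormalMultilinearSeries.ofScalars ℂ (psiCoeff α)).radius = ⊤ :=
  FormalMultilinearSeries.ofScalars_radius_eq_top_of_tendsto ℂ _
    (Eventually.of_forall (psiCoeff_ne_zero hα)) (tendsto_norm_psiCoeff_succ_div hα)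

end PsiCoeff

section PowerSeries

variable {𝕜 : Type*} [NontriviallyNormedField 𝕜] [CompleteSpace 𝕜] {c : ℕ → 𝕜}

lemma summable_mul_pow_of_radius_eq_top
    (hc : (FormalMultilinearSeries.ofScalars 𝕜 c).radius = ⊤) (u : 𝕜) :
    Summable fun n => c n * u ^ n := by
  simpa only [FormalMultilinearSeries.ofScalars_apply_eq, smul_eq_mul] using
    (FormalMultilinearSeries.ofScalars 𝕜 c).summable (x := u) (by simp [hc])

lemma hasDerivAt_tsum_mul_pow
    (hc : (FormalMultilinearSeries.ofScalars 𝕜 c).radius = ⊤) (u : 𝕜) :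
    HasDerivAt (fun v => ∑' n, c n * v ^ n) (∑' n, (n + 1) * c (n + 1) * u ^ n) u := by
  set P := FormalMultilinearSeries.ofScalars 𝕜 c
  have hsum : P.sum = fun v => ∑' n, c n * v ^ n := by
    ext v
    simp only [P, FormalMultilinearSeries.sum, FormalMultilinearSeries.ofScalars_apply_eq,
      smul_eq_mul]
  have hP : HasFPowerSeriesOnBall P.sum P 0 ⊤ := hc ▸ P.hasFPowerSeriesOnBall (by simp [hc])
  have hu : u ∈ Metric.eball (0 : 𝕜) ⊤ := by simp
  have hderiv : deriv P.sum u = ∑' n, (n + 1) * c (n + 1) * u ^ n := by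
    have h := (hP.fderiv.hasSum hu).mapL (ContinuousLinearMap.apply 𝕜 𝕜 (1 : 𝕜))
    simpa [P, FormalMultilinearSeries.apply_eq_pow_smul_coeff,
      FormalMultilinearSeries.coeff_ofScalars, FormalMultilinearSeries.derivSeries_coeff_one,
      mul_comm] using h.tsum_eq.symm
  rw [← hsum, ← hderiv]
  exact (hP.analyticOnNhd u hu).differentiableAt.hasDerivAt

end PowerSeries

section Psi

variable {α : ℂ}

lemma Psi_eq_tsum_psiCoeff (α u : ℂ) : Psi α u = ∑' n, psiCoeff α n * u ^ n := rfl

lemma hasDerivAt_Psi (hα : ∀ n : ℕ, α ≠ -(n : ℂ)) (u : ℂ) :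
    HasDerivAt (Psi α) (-Psi (α + 1) u / α) u := by
  have hα₀ : α ≠ 0 := by simpa using hα 0
  have hderiv : -Psi (α + 1) u / α = ∑' n : ℕ, (n + 1) * psiCoeff α (n + 1) * u ^ n := by
    rw [Psi_eq_tsum_psiCoeff, ← tsum_neg, ← tsum_div_const]
    refine tsum_congr fun n => ?_
    rw [div_eq_iff hα₀]
    linear_combination -u ^ n * psiCoeff_succ_shift hα n
  exact hderiv ▸ hasDerivAt_tsum_mul_pow (radius_ofScalars_psiCoeff hα) u

lemma contDiff_Psi (hα : ∀ n : ℕ, α ≠ -(n : ℂ)) {n : WithTop ℕ∞} : ContDiff ℂ n (Psi α) :=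
  Differentiable.contDiff fun u => (hasDerivAt_Psi hα u).differentiableAt

lemma Psi_eq_one_add (hα : ∀ n : ℕ, α ≠ -(n : ℂ)) (u : ℂ) :
    Psi α u = 1 + ∑' n, psiCoeff α (n + 1) * u ^ (n + 1) := by
  rw [Psi_eq_tsum_psiCoeff,
    (summable_mul_pow_of_radius_eq_top (radius_ofScalars_psiCoeff hα) u).tsum_eq_zero_add]
  simp

lemma mul_Psi_add_two (hα : ∀ n : ℕ, α ≠ -(n : ℂ)) (u : ℂ) :
    u * Psi (α + 1 + 1) u = α * (α + 1) * (Psi (α + 1) u - Psi α u) := by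
  have hα' := add_one_ne_neg_natCast hα
  have hsummable {β : ℂ} (hβ : ∀ n : ℕ, β ≠ -(n : ℂ)) :
      Summable fun n => psiCoeff β (n + 1) * u ^ (n + 1) :=
    (summable_nat_add_iff 1).2
      (summable_mul_pow_of_radius_eq_top (radius_ofScalars_psiCoeff hβ) u)
  rw [Psi_eq_one_add hα', Psi_eq_one_add hα, add_sub_add_left_eq_sub,
    ← (hsummable hα').tsum_sub (hsummable hα), Psi_eq_tsum_psiCoeff,
    ← tsum_mul_left, ← tsum_mul_left]
  refine tsum_congr fun n => ?_
  linear_combination u ^ (n + 1) * psiCoeff_contiguous hα n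

end Psi

/-- The radial profile `u ↦ u ^ a Ψ_α(s u)`: for frozen `y` and `s = ρ_y`, the function
`ρ_x ^ a ψ_α` is this profile at `u = ρ_x`, and symmetrically with `x` and `y` exchanged. -/
def powMulPsi (a : ℤ) (α s u : ℂ) : ℂ := u ^ a * Psi α (s * u)

/-- The derivative of `powMulPsi a α s`, as a combination of neighbouring profiles. -/
def powMulPsiDeriv (a : ℤ) (α s u : ℂ) : ℂ :=
  a * powMulPsi (a - 1) α s u - s / α * powMulPsi a (α + 1) s u

section PowMulPsi

variable {α : ℂ}

lemma mul_powMulPsi {u : ℂ} (hu : u ≠ 0) (a : ℤ) (α s : ℂ) :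
    u * powMulPsi a α s u = powMulPsi (a + 1) α s u := by
  rw [powMulPsi, powMulPsi, zpow_add_one₀ hu]
  ring

lemma powMulPsi_add_two {u : ℂ} (hα : ∀ n : ℕ, α ≠ -(n : ℂ)) (hu : u ≠ 0) (a : ℤ) (s : ℂ) :
    s * powMulPsi (a + 1) (α + 1 + 1) s u =
      α * (α + 1) * (powMulPsi a (α + 1) s u - powMulPsi a α s u) := by
  simp only [powMulPsi, zpow_add_one₀ hu]
  linear_combination u ^ a * mul_Psi_add_two hα (s * u)

lemma hasDerivAt_powMulPsi (hα : ∀ n : ℕ, α ≠ -(n : ℂ)) (a : ℤ) (s : ℂ) {u : ℂ} (hu : u ≠ 0) :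
    HasDerivAt (powMulPsi a α s) (powMulPsiDeriv a α s u) u := by
  have hPsi := (hasDerivAt_Psi hα (s * u)).comp u ((hasDerivAt_id u).const_mul s)
  refine ((hasDerivAt_zpow a u (.inl hu)).mul hPsi).congr_deriv ?_
  simp only [powMulPsiDeriv, powMulPsi, Function.comp_apply]
  ring

lemma hasDerivAt_powMulPsiDeriv (hα : ∀ n : ℕ, α ≠ -(n : ℂ)) (a : ℤ) (s : ℂ) {u : ℂ}
    (hu : u ≠ 0) :
    HasDerivAt (powMulPsiDeriv a α s)
      (a * powMulPsiDeriv (a - 1) α s u - s / α * powMulPsiDeriv a (α + 1) s u) u :=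
  ((hasDerivAt_powMulPsi hα (a - 1) s hu).const_mul _).sub
    ((hasDerivAt_powMulPsi (add_one_ne_neg_natCast hα) a s hu).const_mul _)

lemma mul_powMulPsiDeriv (a : ℤ) (α s : ℂ) {u : ℂ} (hu : u ≠ 0) :
    u * powMulPsiDeriv a α s u =
      a * powMulPsi a α s u - s / α * powMulPsi (a + 1) (α + 1) s u := by
  have hlower := mul_powMulPsi hu (a - 1) α s
  rw [sub_add_cancel] at hlower
  rw [powMulPsiDeriv, ← hlower, ← mul_powMulPsi hu]
  ring

lemma powMulPsi_ode (hα : ∀ n : ℕ, α ≠ -(n : ℂ)) (κ : ℂ) (a : ℤ) (s : ℂ) {u : ℂ}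
    (hu : u ≠ 0) :
    u * (a * powMulPsiDeriv (a - 1) α s u - s / α * powMulPsiDeriv a (α + 1) s u) +
        κ * powMulPsiDeriv a α s u =
      a * (κ + a - 1) * powMulPsi (a - 1) α s u -
        (κ + 2 * a - α) / α * s * powMulPsi a (α + 1) s u - s * powMulPsi a α s u := by
  have hα₀ : α ≠ 0 := by simpa using hα 0
  have hα₁ : α + 1 ≠ 0 := by simpa using add_one_ne_neg_natCast hα 0
  have hlower : u * powMulPsiDeriv (a - 1) α s u =
      (a - 1) * powMulPsi (a - 1) α s u - s / α * powMulPsi a (α + 1) s u := by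
    simpa using mul_powMulPsiDeriv (a - 1) α s hu
  have hshift : u * powMulPsiDeriv a (α + 1) s u =
      a * powMulPsi a (α + 1) s u - α * (powMulPsi a (α + 1) s u - powMulPsi a α s u) := by
    rw [mul_powMulPsiDeriv a (α + 1) s hu, div_mul_eq_mul_div, powMulPsi_add_two hα hu]
    field_simp
  have hcoeff : (κ + 2 * a - α) / α * s = (κ + 2 * a) * (s / α) - s := by field_simp
  have hcancel : s / α * α = s := div_mul_cancel₀ s hα₀
  rw [powMulPsiDeriv.eq_def a α, hcoeff]
  linear_combination a * hlower - s / α * hshift +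
    (powMulPsi a (α + 1) s u - powMulPsi a α s u) * hcancel

end PowMulPsi

section Radial

variable {ι : Type*} [Fintype ι]

/-- `ρ = r² / 2` on `ℝ^ι`. -/
def halfSqNorm (x : ι → ℝ) : ℝ := (∑ i, x i ^ 2) / 2

lemma halfSqNorm_ne_zero {x : ι → ℝ} (hx : x ≠ 0) : halfSqNorm x ≠ 0 := by
  obtain ⟨i, hi⟩ := Function.ne_iff.1 hx
  have hpos : 0 < ∑ i, x i ^ 2 :=
    Finset.sum_pos' (fun j _ => sq_nonneg (x j)) ⟨i, Finset.mem_univ i, sq_pos_of_ne_zero hi⟩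
  exact (half_pos hpos).ne'

lemma contDiff_halfSqNorm {n : WithTop ℕ∞} : ContDiff ℝ n (halfSqNorm : (ι → ℝ) → ℝ) := by
  unfold halfSqNorm
  fun_prop

lemma hasFDerivAt_halfSqNorm (x : ι → ℝ) :
    HasFDerivAt halfSqNorm (∑ i, x i • (ContinuousLinearMap.proj i : (ι → ℝ) →L[ℝ] ℝ)) x := by
  have hsq (i : ι) : HasFDerivAt (fun w : ι → ℝ => w i ^ 2)
      ((2 * x i) • (ContinuousLinearMap.proj i : (ι → ℝ) →L[ℝ] ℝ)) x := by
    have hpow := (hasDerivAt_pow 2 (x i)).comp_hasFDerivAt x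
      (ContinuousLinearMap.proj i : (ι → ℝ) →L[ℝ] ℝ).hasFDerivAt
    exact hpow.congr_fderiv (by simp)
  refine ((HasFDerivAt.fun_sum fun i (_ : i ∈ Finset.univ) => hsq i).mul_const 2⁻¹).congr_fderiv ?_
  simp only [Finset.smul_sum, smul_smul]
  simp

lemma hasFDerivAt_mul_radial {h : (ι → ℝ) → ℂ} {h' : (ι → ℝ) →L[ℝ] ℂ} {G : ℂ → ℂ} {G' : ℂ}
    {x : ι → ℝ} (hh : HasFDerivAt h h' x) (hG : HasDerivAt G G' (halfSqNorm x)) :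
    HasFDerivAt (fun w => h w * G (halfSqNorm w))
      (G (halfSqNorm x) • h' + (h x * G') •
        Complex.ofRealCLM.comp (∑ i, x i • (ContinuousLinearMap.proj i : (ι → ℝ) →L[ℝ] ℝ))) x := by
  have hcomp := hG.comp_ofReal.hasFDerivAt.comp x (hasFDerivAt_halfSqNorm x)
  refine (hh.mul hcomp).congr_fderiv ?_
  ext v
  simp only [Function.comp_apply, add_apply, smul_apply, ContinuousLinearMap.comp_apply, sum_apply,
    ContinuousLinearMap.proj_apply, smul_eq_mul, map_sum, ContinuousLinearMap.toSpanSingleton_apply,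
    Complex.real_smul, Complex.ofReal_mul, ← Finset.sum_mul, Complex.ofRealCLM_apply]
  ring

lemma fderiv_mul_radial {h : (ι → ℝ) → ℂ} {G : ℂ → ℂ} {G' : ℂ} {x : ι → ℝ}
    (hh : DifferentiableAt ℝ h x) (hG : HasDerivAt G G' (halfSqNorm x)) (v : ι → ℝ) :
    fderiv ℝ (fun w => h w * G (halfSqNorm w)) x v =
      fderiv ℝ h x v * G (halfSqNorm x) + h x * ((∑ i, x i * v i : ℝ) * G') := by
  rw [(hasFDerivAt_mul_radial hh.hasFDerivAt hG).fderiv]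
  simp only [add_apply, smul_apply, smul_eq_mul, ContinuousLinearMap.comp_apply, sum_apply,
    ContinuousLinearMap.proj_apply, map_sum, Complex.ofRealCLM_apply, Complex.ofReal_mul,
    Complex.ofReal_sum]
  ring

variable [DecidableEq ι]

/-- The Laplacian `∑ i, ∂_i²` on `ℝ^ι`, in coordinates. -/
def coordLaplacian (f : (ι → ℝ) → ℂ) (x : ι → ℝ) : ℂ :=
  ∑ i, fderiv ℝ (fun w => fderiv ℝ f w (Pi.single i 1)) x (Pi.single i 1)

lemma sum_mul_apply_single (L : (ι → ℝ) →L[ℝ] ℂ) (x : ι → ℝ) :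
    ∑ i, (x i : ℂ) * L (Pi.single i 1) = L x := by
  conv_rhs => rw [pi_eq_sum_univ' x, map_sum]
  simp

lemma fderiv_fderiv_mul_radial {h : (ι → ℝ) → ℂ} {G G' : ℂ → ℂ} {G'' : ℂ} {x : ι → ℝ}
    (hh : ContDiffAt ℝ 2 h x) (hG : ∀ᶠ u in 𝓝 (halfSqNorm x : ℂ), HasDerivAt G (G' u) u)
    (hG' : HasDerivAt G' G'' (halfSqNorm x)) (i : ι) :
    fderiv ℝ (fun w => fderiv ℝ (fun w => h w * G (halfSqNorm w)) w (Pi.single i 1)) x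
        (Pi.single i 1) =
      fderiv ℝ (fun w => fderiv ℝ h w (Pi.single i 1)) x (Pi.single i 1) * G (halfSqNorm x) +
        2 * (x i * fderiv ℝ h x (Pi.single i 1)) * G' (halfSqNorm x) +
        h x * (G' (halfSqNorm x) + (x i ^ 2 : ℝ) * G'') := by
  have hh_diff : DifferentiableAt ℝ h x := hh.differentiableAt (by norm_num)
  have hcoord : HasFDerivAt (fun w : ι → ℝ => (w i : ℂ))
      (Complex.ofRealCLM.comp (ContinuousLinearMap.proj i : (ι → ℝ) →L[ℝ] ℝ)) x :=
    (Complex.ofRealCLM.comp (ContinuousLinearMap.proj i : (ι → ℝ) →L[ℝ] ℝ)).hasFDerivAt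
  have hpartial_diff : DifferentiableAt ℝ (fun w => fderiv ℝ h w (Pi.single i 1)) x :=
    ((hh.fderiv_right (m := 1) (by norm_num)).differentiableAt (by norm_num)).clm_apply
      (differentiableAt_const _)
  have hfirst : (fun w => fderiv ℝ (fun w => h w * G (halfSqNorm w)) w (Pi.single i 1)) =ᶠ[𝓝 x]
      fun w => fderiv ℝ h w (Pi.single i 1) * G (halfSqNorm w) +
        h w * w i * G' (halfSqNorm w) := by
    have hρ : Tendsto (fun w : ι → ℝ => (halfSqNorm w : ℂ)) (𝓝 x) (𝓝 (halfSqNorm x)) :=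
      (Complex.continuous_ofReal.comp (contDiff_halfSqNorm (n := 0)).continuous).tendsto x
    filter_upwards [hρ.eventually hG, hh.eventually (by simp)] with w hGw hhw
    rw [fderiv_mul_radial (hhw.differentiableAt (by norm_num)) hGw]
    simp only [Pi.single_apply, mul_ite, mul_one, mul_zero, Finset.sum_ite_eq', Finset.mem_univ,
      ↓reduceIte]
    ring
  rw [hfirst.fderiv_eq, ((hasFDerivAt_mul_radial hpartial_diff.hasFDerivAt hG.self_of_nhds).fun_add
    (hasFDerivAt_mul_radial (hh_diff.hasFDerivAt.fun_mul hcoord) hG')).fderiv]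
  simp only [smul_add, add_apply, smul_apply, smul_eq_mul, ContinuousLinearMap.comp_apply,
    sum_apply, ContinuousLinearMap.proj_apply, Pi.single_apply, mul_ite, mul_one, mul_zero,
    Finset.sum_ite_eq', Finset.mem_univ, ↓reduceIte, Complex.ofRealCLM_apply, Complex.ofReal_one,
    Complex.ofReal_pow]
  ring

lemma coordLaplacian_mul_radial {h : (ι → ℝ) → ℂ} {G G' : ℂ → ℂ} {G'' : ℂ} {x : ι → ℝ}
    (hh : ContDiffAt ℝ 2 h x) (hG : ∀ᶠ u in 𝓝 (halfSqNorm x : ℂ), HasDerivAt G (G' u) u)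
    (hG' : HasDerivAt G' G'' (halfSqNorm x)) :
    coordLaplacian (fun w => h w * G (halfSqNorm w)) x =
      coordLaplacian h x * G (halfSqNorm x) + 2 * fderiv ℝ h x x * G' (halfSqNorm x) +
        h x * (Fintype.card ι * G' (halfSqNorm x) + 2 * halfSqNorm x * G'') := by
  have hρ : (2 * halfSqNorm x : ℂ) = ∑ i, ((x i ^ 2 : ℝ) : ℂ) := by
    rw [halfSqNorm]
    push_cast
    ring
  simp only [coordLaplacian, fderiv_fderiv_mul_radial hh hG hG', Finset.sum_add_distrib]
  rw [hρ, ← sum_mul_apply_single (fderiv ℝ h x) x]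
  simp only [Finset.sum_mul, Finset.mul_sum, mul_add, Finset.sum_add_distrib,
    Finset.sum_const, Finset.card_univ, nsmul_eq_mul]
  ring

end Radial

section EvalMvPolynomial

variable {ι : Type*}

lemma hasFDerivAt_eval_mvPolynomial [Fintype ι] (P : MvPolynomial ι ℝ) (x : ι → ℝ) :
    HasFDerivAt (fun w => eval w P)
      (∑ i, eval x (pderiv i P) • (ContinuousLinearMap.proj i : (ι → ℝ) →L[ℝ] ℝ)) x := by
  classical
  induction P using MvPolynomial.induction_on with
  | C r => simpa using hasFDerivAt_const r x
  | add P Q hP hQ => simpa [add_smul, Finset.sum_add_distrib] using hP.fun_add hQ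
  | mul_X P j hP =>
    have hX : HasFDerivAt (fun w : ι → ℝ => w j)
        (ContinuousLinearMap.proj j : (ι → ℝ) →L[ℝ] ℝ) x :=
      (ContinuousLinearMap.proj j : (ι → ℝ) →L[ℝ] ℝ).hasFDerivAt
    simp only [map_mul, eval_X]
    refine (hP.fun_mul hX).congr_fderiv ?_
    ext v
    simp [pderiv_X, Pi.single_apply, add_mul, Finset.sum_add_distrib, Finset.mul_sum, mul_assoc,
      apply_ite (eval x)]
lemma fderiv_eval_mvPolynomial_single [Finite ι] [DecidableEq ι] (P : MvPolynomial ι ℝ)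
    (x : ι → ℝ) (i : ι) :
    fderiv ℝ (fun w => ((eval w P : ℝ) : ℂ)) x (Pi.single i 1) =
      (eval x (pderiv i P) : ℝ) := by
  cases nonempty_fintype ι
  have hderiv : HasFDerivAt (fun w => ((eval w P : ℝ) : ℂ)) _ x :=
    Complex.ofRealCLM.hasFDerivAt.comp x (hasFDerivAt_eval_mvPolynomial P x)
  rw [hderiv.fderiv]
  simp [Pi.single_apply]

lemma contDiff_eval_mvPolynomial [Fintype ι] (P : MvPolynomial ι ℝ) {n : WithTop ℕ∞} :
    ContDiff ℝ n fun w => ((eval w P : ℝ) : ℂ) :=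
  Complex.ofRealCLM.contDiff.comp (AnalyticOnNhd.eval_mvPolynomial P).contDiff

end EvalMvPolynomial

section Harmonic

variable {ι : Type*} [Fintype ι] [DecidableEq ι]

/-- The infinitesimal form, at a point `x`, of harmonicity and homogeneity of degree `k`:
`h` is `C²` near `x` and satisfies Euler's identity `E h = k h` and `Δ h = 0` at `x`. The degree
is allowed to be any complex number. -/
structure IsHarmonicHomogeneousAt (k : ℂ) (h : (ι → ℝ) → ℂ) (x : ι → ℝ) : Prop where
  contDiffAt : ContDiffAt ℝ 2 h x
  euler : fderiv ℝ h x x = k * h x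
  laplacian_eq_zero : coordLaplacian h x = 0

namespace IsHarmonicHomogeneousAt

variable {k : ℂ} {h : (ι → ℝ) → ℂ} {x : ι → ℝ}

lemma const_mul (hh : IsHarmonicHomogeneousAt k h x) (c : ℂ) :
    IsHarmonicHomogeneousAt k (fun w => c * h w) x where
  contDiffAt := contDiffAt_const.mul hh.contDiffAt
  euler := by
    have hdiff : DifferentiableAt ℝ h x := hh.contDiffAt.differentiableAt (by norm_num)
    rw [fderiv_const_mul hdiff, smul_apply, hh.euler, smul_eq_mul]
    ring
  laplacian_eq_zero := by
    have hradial := coordLaplacian_mul_radial (G := fun _ => c) (G' := fun _ => 0)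
      hh.contDiffAt (.of_forall fun u => hasDerivAt_const u c) (hasDerivAt_const _ 0)
    simpa [mul_comm, hh.laplacian_eq_zero] using hradial

variable {α : ℂ}

lemma fderiv_mul_powMulPsi_self (hh : IsHarmonicHomogeneousAt k h x) (hx : x ≠ 0)
    (hα : ∀ n : ℕ, α ≠ -(n : ℂ)) (a : ℤ) (s : ℂ) :
    fderiv ℝ (fun w => h w * powMulPsi a α s (halfSqNorm w)) x x =
      h x * ((k + 2 * a) * powMulPsi a α s (halfSqNorm x) -
        2 * s / α * powMulPsi (a + 1) (α + 1) s (halfSqNorm x)) := by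
  have hρ : (halfSqNorm x : ℂ) ≠ 0 := mod_cast halfSqNorm_ne_zero hx
  have hnorm : ∑ i, x i * x i = 2 * halfSqNorm x := by
    simp only [halfSqNorm, pow_two]
    ring
  rw [fderiv_mul_radial (hh.contDiffAt.differentiableAt (by norm_num))
    (hasDerivAt_powMulPsi hα a s hρ), hh.euler, hnorm]
  push_cast
  linear_combination 2 * h x * mul_powMulPsiDeriv a α s hρ

lemma coordLaplacian_mul_powMulPsi (hh : IsHarmonicHomogeneousAt k h x) (hx : x ≠ 0)
    (hα : ∀ n : ℕ, α ≠ -(n : ℂ)) {κ : ℂ} (hκ : κ = k + Fintype.card ι / 2) (a : ℤ) (s : ℂ) :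
    coordLaplacian (fun w => h w * powMulPsi a α s (halfSqNorm w)) x =
      2 * h x * (a * (κ + a - 1) * powMulPsi (a - 1) α s (halfSqNorm x) -
        (κ + 2 * a - α) / α * s * powMulPsi a (α + 1) s (halfSqNorm x) -
        s * powMulPsi a α s (halfSqNorm x)) := by
  have hρ : (halfSqNorm x : ℂ) ≠ 0 := mod_cast halfSqNorm_ne_zero hx
  have hderiv : ∀ᶠ u in 𝓝 (halfSqNorm x : ℂ),
      HasDerivAt (powMulPsi a α s) (powMulPsiDeriv a α s u) u :=
    (eventually_ne_nhds hρ).mono fun u hu => hasDerivAt_powMulPsi hα a s hu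
  rw [coordLaplacian_mul_radial hh.contDiffAt hderiv (hasDerivAt_powMulPsiDeriv hα a s hρ),
    hh.laplacian_eq_zero, hh.euler, ← powMulPsi_ode hα κ a s hρ, hκ]
  ring

end IsHarmonicHomogeneousAt

lemma isHarmonicHomogeneousAt_eval {P : MvPolynomial ι ℝ} {k : ℕ} (hhom : P.IsHomogeneous k)
    (hharm : ∑ i, pderiv i (pderiv i P) = 0) (x : ι → ℝ) :
    IsHarmonicHomogeneousAt k (fun w => ((eval w P : ℝ) : ℂ)) x where
  contDiffAt := (contDiff_eval_mvPolynomial P).contDiffAt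
  euler := by
    have heuler : ∑ i, x i * eval x (pderiv i P) = k * eval x P := by
      simpa using congrArg (eval x) hhom.sum_X_mul_pderiv
    rw [← sum_mul_apply_single]
    simp only [fderiv_eval_mvPolynomial_single]
    exact_mod_cast heuler
  laplacian_eq_zero := by
    simp only [coordLaplacian, fderiv_eval_mvPolynomial_single]
    rw [← Complex.ofReal_sum, ← map_sum, hharm, map_zero, Complex.ofReal_zero]

end Harmonic

section Slices

variable {E F M : Type*} [NormedAddCommGroup E] [NormedSpace ℝ E] [NormedAddCommGroup F]
  [NormedSpace ℝ F] [NormedAddCommGroup M] [NormedSpace ℝ M] {f : F → M} {φ : E → F} {L : E →L[ℝ] F}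

lemma fderiv_comp_of_hasFDerivAt_const (hφ : ∀ w, HasFDerivAt φ L w) {w : E}
    (hf : DifferentiableAt ℝ f (φ w)) (v : E) :
    fderiv ℝ (fun w => f (φ w)) w v = fderiv ℝ f (φ w) (L v) := by
  have hcomp : HasFDerivAt (fun w => f (φ w)) _ w := hf.hasFDerivAt.comp w (hφ w)
  rw [hcomp.fderiv, ContinuousLinearMap.comp_apply]

lemma fderiv_fderiv_comp_of_hasFDerivAt_const (hφ : ∀ w, HasFDerivAt φ L w) {w : E}
    (hf : ContDiffAt ℝ 2 f (φ w)) (v : E) :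
    fderiv ℝ (fun w => fderiv ℝ (fun w => f (φ w)) w v) w v =
      fderiv ℝ (fun z => fderiv ℝ f z (L v)) (φ w) (L v) := by
  have hpartial : DifferentiableAt ℝ (fun z => fderiv ℝ f z (L v)) (φ w) :=
    ((hf.fderiv_right (m := 1) (by norm_num)).differentiableAt (by norm_num)).clm_apply
      (differentiableAt_const _)
  have hfirst : (fun w => fderiv ℝ (fun w => f (φ w)) w v) =ᶠ[𝓝 w]
      fun w => fderiv ℝ f (φ w) (L v) := by
    filter_upwards [(hφ w).continuousAt.eventually (hf.eventually (by simp))] with u hu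
    exact fderiv_comp_of_hasFDerivAt_const hφ (hu.differentiableAt (by norm_num)) v
  rw [hfirst.fderiv_eq, fderiv_comp_of_hasFDerivAt_const hφ hpartial]

end Slices

section Operators

variable {p q : ℕ} {f : Pt p q → ℂ} {z : Pt p q}

lemma sum_mul_pdx_eq_fderiv_slice (hf : DifferentiableAt ℝ f z) :
    ∑ i, (z.1 i : ℂ) * pdx p q i f z = fderiv ℝ (fun x => f (x, z.2)) z.1 z.1 := by
  rw [← sum_mul_apply_single]
  refine Finset.sum_congr rfl fun i _ => ?_
  rw [fderiv_comp_of_hasFDerivAt_const (f := f) (fun x => hasFDerivAt_prodMk_left x z.2) hf]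
  rfl

lemma sum_mul_pdy_eq_fderiv_slice (hf : DifferentiableAt ℝ f z) :
    ∑ j, (z.2 j : ℂ) * pdy p q j f z = fderiv ℝ (fun y => f (z.1, y)) z.2 z.2 := by
  rw [← sum_mul_apply_single]
  refine Finset.sum_congr rfl fun j _ => ?_
  rw [fderiv_comp_of_hasFDerivAt_const (f := f) (fun y => hasFDerivAt_prodMk_right z.1 y) hf]
  rfl

lemma sum_pdx_pdx_eq_coordLaplacian_slice (hf : ContDiffAt ℝ 2 f z) :
    ∑ i, pdx p q i (pdx p q i f) z = coordLaplacian (fun x => f (x, z.2)) z.1 := by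
  refine Finset.sum_congr rfl fun i _ => ?_
  rw [fderiv_fderiv_comp_of_hasFDerivAt_const (f := f) (fun x => hasFDerivAt_prodMk_left x z.2) hf]
  rfl

lemma sum_pdy_pdy_eq_coordLaplacian_slice (hf : ContDiffAt ℝ 2 f z) :
    ∑ j, pdy p q j (pdy p q j f) z = coordLaplacian (fun y => f (z.1, y)) z.2 := by
  refine Finset.sum_congr rfl fun j _ => ?_
  rw [fderiv_fderiv_comp_of_hasFDerivAt_const (f := f) (fun y => hasFDerivAt_prodMk_right z.1 y) hf]
  rfl

end Operators

section LadderFun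

variable {p q : ℕ}

/-- The function `h₁ h₂ ρ_x ^ a ρ_y ^ b ψ_α`, for arbitrary `h₁`, `h₂` and integer exponents.
Negative exponents give the junk value `0` where `ρ_x` or `ρ_y` vanishes. -/
def ladderFun (h₁ : (Fin p → ℝ) → ℂ) (h₂ : (Fin q → ℝ) → ℂ) (a b : ℤ) (α : ℂ)
    (z : Pt p q) : ℂ :=
  h₁ z.1 * h₂ z.2 * (rhox p q z : ℂ) ^ a * (rhoy p q z : ℂ) ^ b * psiF p q α z

lemma contDiff_psiF {α : ℂ} (hα : ∀ n : ℕ, α ≠ -(n : ℂ)) {n : WithTop ℕ∞} :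
    ContDiff ℝ n (psiF p q α) :=
  ((contDiff_Psi hα).restrict_scalars ℝ).comp (Complex.ofRealCLM.contDiff.comp
    ((contDiff_halfSqNorm.comp contDiff_fst).mul (contDiff_halfSqNorm.comp contDiff_snd)))

lemma contDiffAt_halfSqNorm_zpow {ι : Type*} [Fintype ι] {x : ι → ℝ} (hx : x ≠ 0) (a : ℤ)
    {n : WithTop ℕ∞} : ContDiffAt ℝ n (fun w => (halfSqNorm w : ℂ) ^ a) x := by
  have hρ : (halfSqNorm x : ℂ) ≠ 0 := mod_cast halfSqNorm_ne_zero hx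
  have hzpow : ContDiffAt ℝ n (fun u : ℂ => u ^ a) (halfSqNorm x) :=
    ((analyticAt_id (𝕜 := ℝ)).fun_zpow hρ).contDiffAt
  exact hzpow.comp x (Complex.ofRealCLM.contDiff.comp contDiff_halfSqNorm).contDiffAt

variable {h₁ : (Fin p → ℝ) → ℂ} {h₂ : (Fin q → ℝ) → ℂ} {α : ℂ} {z : Pt p q}

lemma contDiffAt_ladderFun (hh₁ : ContDiffAt ℝ 2 h₁ z.1) (hh₂ : ContDiffAt ℝ 2 h₂ z.2)
    (hx : z.1 ≠ 0) (hy : z.2 ≠ 0) (a b : ℤ) (hα : ∀ n : ℕ, α ≠ -(n : ℂ)) :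
    ContDiffAt ℝ 2 (ladderFun h₁ h₂ a b α) z :=
  ((((hh₁.comp z contDiffAt_fst).mul (hh₂.comp z contDiffAt_snd)).mul
    ((contDiffAt_halfSqNorm_zpow hx a).comp z contDiffAt_fst)).mul
    ((contDiffAt_halfSqNorm_zpow hy b).comp z contDiffAt_snd)).mul (contDiff_psiF hα).contDiffAt

lemma ladderFun_eq_mul_powMulPsi_left (h₁ : (Fin p → ℝ) → ℂ) (h₂ : (Fin q → ℝ) → ℂ) (a b : ℤ)
    (α : ℂ) (x : Fin p → ℝ) (y : Fin q → ℝ) :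
    ladderFun h₁ h₂ a b α (x, y) =
      h₂ y * (halfSqNorm y : ℂ) ^ b * h₁ x * powMulPsi a α (halfSqNorm y) (halfSqNorm x) := by
  simp only [ladderFun, psiF, powMulPsi, rhox, rhoy, ← halfSqNorm.eq_def, Complex.ofReal_mul]
  rw [mul_comm (halfSqNorm x : ℂ) (halfSqNorm y)]
  ring

lemma ladderFun_eq_mul_powMulPsi_right (h₁ : (Fin p → ℝ) → ℂ) (h₂ : (Fin q → ℝ) → ℂ) (a b : ℤ)
    (α : ℂ) (x : Fin p → ℝ) (y : Fin q → ℝ) :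
    ladderFun h₁ h₂ a b α (x, y) =
      h₁ x * (halfSqNorm x : ℂ) ^ a * h₂ y * powMulPsi b α (halfSqNorm x) (halfSqNorm y) := by
  simp only [ladderFun, psiF, powMulPsi, rhox, rhoy, ← halfSqNorm.eq_def, Complex.ofReal_mul]
  ring

lemma sum_mul_pdx_ladderFun {k : ℂ} (hh₁ : IsHarmonicHomogeneousAt k h₁ z.1)
    (hh₂ : ContDiffAt ℝ 2 h₂ z.2) (hx : z.1 ≠ 0) (hy : z.2 ≠ 0) (a b : ℤ)
    (hα : ∀ n : ℕ, α ≠ -(n : ℂ)) :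
    ∑ i, (z.1 i : ℂ) * pdx p q i (ladderFun h₁ h₂ a b α) z =
      (k + 2 * a) * ladderFun h₁ h₂ a b α z -
        2 / α * ladderFun h₁ h₂ (a + 1) (b + 1) (α + 1) z := by
  have hsmooth := contDiffAt_ladderFun hh₁.contDiffAt hh₂ hx hy a b hα
  obtain ⟨x, y⟩ := z
  have hρ : (halfSqNorm y : ℂ) ≠ 0 := mod_cast halfSqNorm_ne_zero hy
  rw [sum_mul_pdx_eq_fderiv_slice (hsmooth.differentiableAt (by norm_num))]
  simp only [ladderFun_eq_mul_powMulPsi_left]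
  rw [(hh₁.const_mul _).fderiv_mul_powMulPsi_self hx hα, zpow_add_one₀ hρ]
  ring

lemma sum_mul_pdy_ladderFun {l : ℂ} (hh₁ : ContDiffAt ℝ 2 h₁ z.1)
    (hh₂ : IsHarmonicHomogeneousAt l h₂ z.2) (hx : z.1 ≠ 0) (hy : z.2 ≠ 0) (a b : ℤ)
    (hα : ∀ n : ℕ, α ≠ -(n : ℂ)) :
    ∑ j, (z.2 j : ℂ) * pdy p q j (ladderFun h₁ h₂ a b α) z =
      (l + 2 * b) * ladderFun h₁ h₂ a b α z -
        2 / α * ladderFun h₁ h₂ (a + 1) (b + 1) (α + 1) z := by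
  have hsmooth := contDiffAt_ladderFun hh₁ hh₂.contDiffAt hx hy a b hα
  obtain ⟨x, y⟩ := z
  have hρ : (halfSqNorm x : ℂ) ≠ 0 := mod_cast halfSqNorm_ne_zero hx
  rw [sum_mul_pdy_eq_fderiv_slice (hsmooth.differentiableAt (by norm_num))]
  simp only [ladderFun_eq_mul_powMulPsi_right]
  rw [(hh₂.const_mul _).fderiv_mul_powMulPsi_self hy hα, zpow_add_one₀ hρ]
  ring

lemma sum_pdx_pdx_ladderFun {k κ : ℂ} (hκ : κ = k + p / 2)
    (hh₁ : IsHarmonicHomogeneousAt k h₁ z.1) (hh₂ : ContDiffAt ℝ 2 h₂ z.2) (hx : z.1 ≠ 0)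
    (hy : z.2 ≠ 0) (a b : ℤ) (hα : ∀ n : ℕ, α ≠ -(n : ℂ)) :
    ∑ i, pdx p q i (pdx p q i (ladderFun h₁ h₂ a b α)) z =
      2 * (a * (κ + a - 1) * ladderFun h₁ h₂ (a - 1) b α z -
        (κ + 2 * a - α) / α * ladderFun h₁ h₂ a (b + 1) (α + 1) z -
        rhoy p q z * ladderFun h₁ h₂ a b α z) := by
  rw [sum_pdx_pdx_eq_coordLaplacian_slice
    (contDiffAt_ladderFun hh₁.contDiffAt hh₂ hx hy a b hα)]
  obtain ⟨x, y⟩ := z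
  have hρ : (halfSqNorm y : ℂ) ≠ 0 := mod_cast halfSqNorm_ne_zero hy
  have hrhoy : rhoy p q (x, y) = halfSqNorm y := rfl
  simp only [ladderFun_eq_mul_powMulPsi_left]
  rw [(hh₁.const_mul _).coordLaplacian_mul_powMulPsi hx hα (κ := κ) (by simpa using hκ),
    zpow_add_one₀ hρ, hrhoy]
  ring

lemma sum_pdy_pdy_ladderFun {l κ : ℂ} (hκ : κ = l + q / 2) (hh₁ : ContDiffAt ℝ 2 h₁ z.1)
    (hh₂ : IsHarmonicHomogeneousAt l h₂ z.2) (hx : z.1 ≠ 0) (hy : z.2 ≠ 0) (a b : ℤ)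
    (hα : ∀ n : ℕ, α ≠ -(n : ℂ)) :
    ∑ j, pdy p q j (pdy p q j (ladderFun h₁ h₂ a b α)) z =
      2 * (b * (κ + b - 1) * ladderFun h₁ h₂ a (b - 1) α z -
        (κ + 2 * b - α) / α * ladderFun h₁ h₂ (a + 1) b (α + 1) z -
        rhox p q z * ladderFun h₁ h₂ a b α z) := by
  rw [sum_pdy_pdy_eq_coordLaplacian_slice
    (contDiffAt_ladderFun hh₁ hh₂.contDiffAt hx hy a b hα)]
  obtain ⟨x, y⟩ := z
  have hρ : (halfSqNorm x : ℂ) ≠ 0 := mod_cast halfSqNorm_ne_zero hx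
  have hrhox : rhox p q (x, y) = halfSqNorm x := rfl
  simp only [ladderFun_eq_mul_powMulPsi_right]
  rw [(hh₂.const_mul _).coordLaplacian_mul_powMulPsi hy hα (κ := κ) (by simpa using hκ),
    zpow_add_one₀ hρ, hrhox]
  ring

variable {k l κp κm : ℂ}

lemma HOp_ladderFun (hκp : κp = k + p / 2) (hκm : κm = l + q / 2)
    (hh₁ : IsHarmonicHomogeneousAt k h₁ z.1) (hh₂ : IsHarmonicHomogeneousAt l h₂ z.2)
    (hx : z.1 ≠ 0) (hy : z.2 ≠ 0) (a b : ℤ) (hα : ∀ n : ℕ, α ≠ -(n : ℂ)) :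
    HOp p q (ladderFun h₁ h₂ a b α) z =
      (-κp + κm - 2 * a + 2 * b) * ladderFun h₁ h₂ a b α z := by
  rw [HOp, sum_mul_pdx_ladderFun hh₁ hh₂.contDiffAt hx hy a b hα,
    sum_mul_pdy_ladderFun hh₁.contDiffAt hh₂ hx hy a b hα, hκp, hκm]
  ring

lemma XpOp_ladderFun (hκp : κp = k + p / 2) (hh₁ : IsHarmonicHomogeneousAt k h₁ z.1)
    (hh₂ : ContDiffAt ℝ 2 h₂ z.2) (hx : z.1 ≠ 0) (hy : z.2 ≠ 0) (a b : ℤ)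
    (hα : ∀ n : ℕ, α ≠ -(n : ℂ)) :
    XpOp p q (ladderFun h₁ h₂ a b α) z =
      -a * (κp + a - 1) * ladderFun h₁ h₂ (a - 1) b α z +
        (κp + 2 * a - α) / α * ladderFun h₁ h₂ a (b + 1) (α + 1) z := by
  rw [XpOp, sum_pdx_pdx_ladderFun hκp hh₁ hh₂ hx hy a b hα, rhoy]
  push_cast
  ring

lemma XmOp_ladderFun (hκm : κm = l + q / 2) (hh₁ : ContDiffAt ℝ 2 h₁ z.1)
    (hh₂ : IsHarmonicHomogeneousAt l h₂ z.2) (hx : z.1 ≠ 0) (hy : z.2 ≠ 0) (a b : ℤ)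
    (hα : ∀ n : ℕ, α ≠ -(n : ℂ)) :
    XmOp p q (ladderFun h₁ h₂ a b α) z =
      b * (κm + b - 1) * ladderFun h₁ h₂ a (b - 1) α z -
        (κm + 2 * b - α) / α * ladderFun h₁ h₂ (a + 1) b (α + 1) z := by
  rw [XmOp, sum_pdy_pdy_ladderFun hκm hh₁ hh₂ hx hy a b hα, rhox]
  push_cast
  ring

theorem stmt_14_general (hκp : κp = k + p / 2) (hκm : κm = l + q / 2)
    (hh₁ : IsHarmonicHomogeneousAt k h₁ z.1) (hh₂ : IsHarmonicHomogeneousAt l h₂ z.2)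
    (hx : z.1 ≠ 0) (hy : z.2 ≠ 0) (a b : ℤ) (hα : ∀ n : ℕ, α ≠ -(n : ℂ)) :
    HOp p q (ladderFun h₁ h₂ a b α) z =
        (-κp + κm - 2 * a + 2 * b) * ladderFun h₁ h₂ a b α z ∧
      XpOp p q (ladderFun h₁ h₂ a b α) z = h₁ z.1 * h₂ z.2 *
        (-a * (κp + a - 1) * (rhox p q z : ℂ) ^ (a - 1) * (rhoy p q z : ℂ) ^ b * psiF p q α z
          + (κp + 2 * a - α) / α * (rhox p q z : ℂ) ^ a * (rhoy p q z : ℂ) ^ (b + 1) *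
            psiF p q (α + 1) z) ∧
      XmOp p q (ladderFun h₁ h₂ a b α) z = h₁ z.1 * h₂ z.2 *
        (b * (κm + b - 1) * (rhox p q z : ℂ) ^ a * (rhoy p q z : ℂ) ^ (b - 1) * psiF p q α z
          - (κm + 2 * b - α) / α * (rhox p q z : ℂ) ^ (a + 1) * (rhoy p q z : ℂ) ^ b *
            psiF p q (α + 1) z) := by
  refine ⟨HOp_ladderFun hκp hκm hh₁ hh₂ hx hy a b hα, ?_, ?_⟩
  · rw [XpOp_ladderFun hκp hh₁ hh₂.contDiffAt hx hy a b hα, ladderFun, ladderFun]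
    ring
  · rw [XmOp_ladderFun hκm hh₁.contDiffAt hh₂ hx hy a b hα, ladderFun, ladderFun]
    ring

end LadderFun

end

theorem stmt_14 (p q k l : ℕ) (hp : 1 ≤ p) (hq : 1 ≤ q)
    (h₁ : MvPolynomial (Fin p) ℝ) (h₂ : MvPolynomial (Fin q) ℝ)
    (hhom₁ : h₁.IsHomogeneous k) (hhom₂ : h₂.IsHomogeneous l)
    (hharm₁ : ∑ i : Fin p, MvPolynomial.pderiv i (MvPolynomial.pderiv i h₁) = 0)
    (hharm₂ : ∑ j : Fin q, MvPolynomial.pderiv j (MvPolynomial.pderiv j h₂) = 0)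
    (κp κm : ℂ) (hκp : κp = (k : ℂ) + (p : ℂ) / 2) (hκm : κm = (l : ℂ) + (q : ℂ) / 2)
    (a b : ℕ) (α : ℂ) (hα : ∀ n : ℕ, α ≠ -(n : ℂ))
    (E₁ E₂ : Pt p q → ℂ)
    (hE₁ : E₁ = fun z => ((MvPolynomial.eval z.1 h₁ : ℝ) : ℂ))
    (hE₂ : E₂ = fun z => ((MvPolynomial.eval z.2 h₂ : ℝ) : ℂ))
    (f : Pt p q → ℂ)
    (hf : f = fun z => E₁ z * E₂ z * ((rhox p q z : ℝ) : ℂ) ^ (a : ℤ) *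
      ((rhoy p q z : ℝ) : ℂ) ^ (b : ℤ) * psiF p q α z) :
    ∀ z : Pt p q, z.1 ≠ 0 → z.2 ≠ 0 →
      HOp p q f z = (-κp + κm - 2 * (a : ℂ) + 2 * (b : ℂ)) * f z ∧
      XpOp p q f z = E₁ z * E₂ z *
        (-(a : ℂ) * (κp + (a : ℂ) - 1) * ((rhox p q z : ℝ) : ℂ) ^ ((a : ℤ) - 1) *
            ((rhoy p q z : ℝ) : ℂ) ^ (b : ℤ) * psiF p q α z
          + ((κp + 2 * (a : ℂ) - α) / α) * ((rhox p q z : ℝ) : ℂ) ^ (a : ℤ) *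
            ((rhoy p q z : ℝ) : ℂ) ^ ((b : ℤ) + 1) * psiF p q (α + 1) z) ∧
      XmOp p q f z = E₁ z * E₂ z *
        ((b : ℂ) * (κm + (b : ℂ) - 1) * ((rhox p q z : ℝ) : ℂ) ^ (a : ℤ) *
            ((rhoy p q z : ℝ) : ℂ) ^ ((b : ℤ) - 1) * psiF p q α z
          - ((κm + 2 * (b : ℂ) - α) / α) * ((rhox p q z : ℝ) : ℂ) ^ ((a : ℤ) + 1) *
            ((rhoy p q z : ℝ) : ℂ) ^ (b : ℤ) * psiF p q (α + 1) z) := by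
  subst hE₁ hE₂ hf
  exact fun z hx hy => stmt_14_general hκp hκm (isHarmonicHomogeneousAt_eval hhom₁ hharm₁ z.1)
    (isHarmonicHomogeneousAt_eval hhom₂ hharm₂ z.2) hx hy a b hα
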